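/- Let F ⊆ X^ω be a finite set of ω-words. Then F has the Automatic Baire property if and only if F does not contain a disjunctive ω-word. -/

import Mathlib

open Set MeasureTheory Computability

namespace AutoBaire

/-- The Cantor topology on the space of ω-words over `X`:
the product of the discrete topology on `X`. -/
def cantorTop (X : Type) : TopologicalSpace (ℕ → X) :=
  @Pi.topologicalSpace ℕ (fun _ => X) (fun _ => ⊥)

/-- The Borel σ-algebra of the Cantor space. -/
def cantorBorel (X : Type) : MeasurableSpace (ℕ → X) :=
  @borel (ℕ → X) (cantorTop X)

variable {X : Type}

/-- Concatenation `w·ξ` of a finite word with an ω-word. -/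
def wcat (w : List X) (ξ : ℕ → X) : ℕ → X :=
  Stream'.appendStream' w ξ

/-- The ball (cylinder) `w·X^ω`. -/
def cyl (w : List X) : Set (ℕ → X) := {ξ | ∃ η : ℕ → X, ξ = wcat w η}

/-- The ω-language `W·A` for a language `W` and an ω-language `A`. -/
def catOmega (W : Language X) (A : Set (ℕ → X)) : Set (ℕ → X) :=
  {ξ | ∃ w ∈ W, ∃ η ∈ A, ξ = wcat w η}

/-- `V^ω`: the set of ω-words that are infinite concatenations
`v₁·v₂·⋯` of non-empty words `vᵢ ∈ V`. -/
def omegaPow (V : Language X) : Set (ℕ → X) :=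
  {ξ | ∃ f : ℕ → List X, (∀ i, f i ∈ V ∧ f i ≠ []) ∧
    ∀ k, ξ ∈ cyl (((List.range k).map f).flatten)}

/-- Regular languages: those obtained from finite languages via the operations
union, concatenation and star. -/
inductive IsRegLang : Language X → Prop
  | finite (W : Language X) : (W : Set (List X)).Finite → IsRegLang W
  | union (W V : Language X) : IsRegLang W → IsRegLang V → IsRegLang (W + V)
  | concat (W V : Language X) : IsRegLang W → IsRegLang V → IsRegLang (W * V)
  | star (W : Language X) : IsRegLang W → IsRegLang (W∗)

/-- Regular ω-languages: finite unions `⋃ᵢ Wᵢ·Vᵢ^ω` with `Wᵢ, Vᵢ` regular. -/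
def IsRegOmega (F : Set (ℕ → X)) : Prop :=
  ∃ (n : ℕ) (W V : Fin n → Language X),
    (∀ i, IsRegLang (W i) ∧ IsRegLang (V i)) ∧
    F = ⋃ i, catOmega (W i) (omegaPow (V i))

/-- `X*·w·X^ω`: the set of ω-words containing `w` as an infix. -/
def infixOcc (w : List X) : Set (ℕ → X) :=
  {ξ | ∃ u : List X, ξ ∈ cyl (u ++ w)}

/-- An ω-word is disjunctive if every finite word occurs in it as an infix. -/
def Disjunctive (ξ : ℕ → X) : Prop := ∀ w : List X, ξ ∈ infixOcc w

/-- Ultimately periodic ω-words: `ξ = w·v·v·v·⋯` with `v ≠ e`. -/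
def UltPeriodic (ξ : ℕ → X) : Prop :=
  ∃ (w v : List X) (h : v ≠ []), ξ = wcat w (Stream'.cycle v h)

/-- The Automatic Baire property: `F Δ E ⊆ F'` for some regular open
ω-language `E` and some regular ω-language `F'` of first Baire category. -/
def HasABP (F : Set (ℕ → X)) : Prop :=
  ∃ E F' : Set (ℕ → X),
    IsRegOmega E ∧ @IsOpen _ (cantorTop X) E ∧
    IsRegOmega F' ∧ @IsMeagre _ (cantorTop X) F' ∧
    symmDiff F E ⊆ F'

/-- The measure is finite and non-null: `0 < μ(X^ω) < ∞`. -/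
def FiniteNonNull (μ : @MeasureTheory.Measure (ℕ → X) (cantorBorel X)) : Prop :=
  0 < μ Set.univ ∧ μ Set.univ < ⊤

/-- `supp(μ) = X^ω`: every non-empty open set has positive measure. -/
def FullSupport (μ : @MeasureTheory.Measure (ℕ → X) (cantorBorel X)) : Prop :=
  ∀ U : Set (ℕ → X), @IsOpen _ (cantorTop X) U → U.Nonempty → 0 < μ U

/-- The balance condition: there is `c > 0` such that for all `w ∈ X*`, `x ∈ X`
either `μ(wx·X^ω) = 0` or `c·μ(w·X^ω) ≤ μ(wx·X^ω)`. -/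
def Balanced (μ : @MeasureTheory.Measure (ℕ → X) (cantorBorel X)) : Prop :=
  ∃ c : ENNReal, 0 < c ∧ ∀ (w : List X) (x : X),
    μ (cyl (w ++ [x])) = 0 ∨ c * μ (cyl w) ≤ μ (cyl (w ++ [x]))


theorem wcat_append (a b : List X) (ξ : ℕ → X) : wcat (a ++ b) ξ = wcat a (wcat b ξ) :=
  Stream'.append_append_stream a b ξ

theorem wcat_inj {a : List X} {ξ η : ℕ → X} (h : wcat a ξ = wcat a η) : ξ = η :=
  Stream'.append_right_injective a ξ η h

theorem wcat_inj_left {a b : List X} {ξ η : ℕ → X} (h : wcat a ξ = wcat b η)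
    (hl : a.length = b.length) : a = b :=
  Stream'.append_left_injective a b ξ η h hl

theorem wcat_nil (ξ : ℕ → X) : wcat [] ξ = ξ := rfl

theorem wcat_left (w : List X) (ξ : ℕ → X) (i : ℕ) (h : i < w.length) :
    wcat w ξ i = w[i] := Stream'.get_append_left i w ξ h

theorem exists_split (n : ℕ) (ξ : ℕ → X) :
    ∃ (w : List X) (η : ℕ → X), w.length = n ∧ ξ = wcat w η :=
  ⟨Stream'.take n ξ, Stream'.drop n ξ, Stream'.length_take n ξ,
    (Stream'.append_take_drop n ξ).symm⟩

theorem mem_cyl_wcat (a b : List X) (ξ : ℕ → X) : wcat a ξ ∈ cyl (a ++ b) ↔ ξ ∈ cyl b := by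
  constructor
  · rintro ⟨η, h⟩
    rw [wcat_append] at h
    exact ⟨η, wcat_inj h⟩
  · rintro ⟨η, h⟩
    exact ⟨η, by rw [wcat_append, h]⟩

theorem cyl_append_sub (a b : List X) : cyl (a ++ b) ⊆ cyl a := by
  rintro ξ ⟨η, h⟩
  exact ⟨wcat b η, by rw [h, wcat_append]⟩

theorem mem_cyl_iff (w : List X) (ξ : ℕ → X) :
    ξ ∈ cyl w ↔ ∀ i (h : i < w.length), ξ i = w[i] := by
  constructor
  · rintro ⟨η, rfl⟩ i h
    exact wcat_left w η i h
  · intro h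
    obtain ⟨v, η, hv, rfl⟩ := exists_split w.length ξ
    refine ⟨η, ?_⟩
    congr 1
    apply List.ext_getElem hv
    intro i h1 h2
    rw [← h i h2, wcat_left]

/-- compare two prefixes -/
theorem prefix_of_cyl {a b : List X} {ξ : ℕ → X} (ha : ξ ∈ cyl a) (hb : ξ ∈ cyl b)
    (h : a.length ≤ b.length) : ∃ q, b = a ++ q := by
  obtain ⟨η, rfl⟩ := ha
  obtain ⟨c, η', hc, rfl⟩ := exists_split (b.length - a.length) η
  obtain ⟨ζ, hζ⟩ := hb
  rw [← wcat_append] at hζ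
  exact ⟨c, (wcat_inj_left hζ (by simp; omega)).symm⟩

theorem exists_limit (v : ℕ → List X) (hv : ∀ n, ∃ q, q ≠ [] ∧ v (n + 1) = v n ++ q) :
    ∃ ζ : ℕ → X, ∀ n, ζ ∈ cyl (v n) := by
  have hlen : ∀ n, n ≤ (v n).length := by
    intro n
    induction n with
    | zero => simp
    | succ n ih =>
      obtain ⟨q, hq, h⟩ := hv n
      rw [h, List.length_append]
      have := List.length_pos_iff.mpr hq
      omega
  have hmono : ∀ n k, ∃ q, v (n + k) = v n ++ q := by
    intro n k
    induction k with
    | zero => exact ⟨[], by simp⟩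
    | succ k ih =>
      obtain ⟨q, hq⟩ := ih
      obtain ⟨r, _, hr⟩ := hv (n + k)
      exact ⟨q ++ r, by rw [← add_assoc, hr, hq, List.append_assoc]⟩
  refine ⟨fun i => (v (i + 1))[i]'(hlen (i + 1)), fun n => ?_⟩
  rw [mem_cyl_iff]
  intro i h
  show (v (i + 1))[i]'(hlen (i + 1)) = _
  rcases le_total n (i + 1) with h1 | h1
  · obtain ⟨k, hk⟩ := Nat.exists_eq_add_of_le h1
    obtain ⟨q, hq⟩ := hmono n k
    rw [← hk] at hq
    simp only [hq]
    rw [List.getElem_append_left h]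
  · obtain ⟨k, hk⟩ := Nat.exists_eq_add_of_le h1
    obtain ⟨q, hq⟩ := hmono (i + 1) k
    rw [← hk] at hq
    simp only [hq]
    rw [List.getElem_append_left (hlen (i + 1))]

theorem omegaPow_coind (V : Language X) (P : Set (ℕ → X))
    (hP : ∀ η ∈ P, ∃ v ∈ V, v ≠ [] ∧ ∃ η' ∈ P, η = wcat v η') : P ⊆ omegaPow V := by
  intro η hη
  choose! v hvV hvne nx hnx heq using hP
  have hit : ∀ k, nx^[k] η ∈ P := by
    intro k
    induction k with
    | zero => exact hη
    | succ k ih => rw [Function.iterate_succ_apply']; exact hnx _ ih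
  refine ⟨fun k => v (nx^[k] η), fun i => ⟨hvV _ (hit i), hvne _ (hit i)⟩, fun k => ?_⟩
  refine ⟨nx^[k] η, ?_⟩
  induction k with
  | zero => rfl
  | succ k ih =>
    rw [List.range_succ, List.map_append, List.flatten_append, wcat_append,
      Function.iterate_succ_apply']
    simp only [List.map_cons, List.map_nil, List.flatten_cons, List.flatten_nil, List.append_nil]
    rw [← heq _ (hit k)]
    exact ih

theorem omegaPow_unfold {V : Language X} {η : ℕ → X} (h : η ∈ omegaPow V) :
    ∃ v ∈ V, v ≠ [] ∧ ∃ η' ∈ omegaPow V, η = wcat v η' := by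
  obtain ⟨f, hf, hk⟩ := h
  have h1 := hk 1
  simp at h1
  obtain ⟨η', rfl⟩ := h1
  refine ⟨f 0, (hf 0).1, (hf 0).2, η', ⟨fun i => f (i + 1), fun i => hf _, fun k => ?_⟩, rfl⟩
  have := hk (k + 1)
  rw [List.range_succ_eq_map, List.map_cons, List.flatten_cons, mem_cyl_wcat, List.map_map] at this
  exact this

theorem omegaPow_kstar (V : Language X) : omegaPow (V∗) ⊆ omegaPow V := by
  have key := omegaPow_coind V
    {η | ∃ l : List (List X), (∀ v ∈ l, v ∈ V ∧ v ≠ []) ∧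
      ∃ η' ∈ omegaPow (V∗), η = wcat l.flatten η'} ?_
  · intro η hη
    exact key ⟨[], by simp, η, hη, rfl⟩
  · have step : ∀ l : List (List X), l ≠ [] → (∀ v ∈ l, v ∈ V ∧ v ≠ []) →
        ∀ η' ∈ omegaPow (V∗), ∃ v ∈ V, v ≠ [] ∧ ∃ η'' ∈ {η | ∃ l : List (List X),
          (∀ v ∈ l, v ∈ V ∧ v ≠ []) ∧ ∃ η' ∈ omegaPow (V∗), η = wcat l.flatten η'},
          wcat l.flatten η' = wcat v η'' := by
      intro l hl hv η' hη'
      cases l with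
      | nil => exact absurd rfl hl
      | cons a l =>
        refine ⟨a, (hv a (by simp)).1, (hv a (by simp)).2, wcat l.flatten η',
          ⟨l, fun v h => hv v (by simp [h]), η', hη', rfl⟩, ?_⟩
        rw [List.flatten_cons, wcat_append]
    rintro η ⟨l, hl, η', hη', rfl⟩
    by_cases h : l = []
    · subst h
      obtain ⟨v, hv, hne, η'', hη'', rfl⟩ := omegaPow_unfold hη'
      rw [Language.mem_kstar_iff_exists_nonempty] at hv
      obtain ⟨S, rfl, hS⟩ := hv
      rw [List.flatten_nil, wcat_nil]
      exact step S (by rintro rfl; exact hne rfl) hS _ hη''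
    · exact step l h hl _ hη'

/-! Regular languages -/

theorem isRegular_of_finite {L : Language X} (h : (L : Set (List X)).Finite) :
    (Set.range L.leftQuotient).Finite := by
  have hS : {y : List X | ∃ x, x ++ y ∈ L}.Finite := by
    have : {y : List X | ∃ x, x ++ y ∈ L} ⊆ ⋃ w ∈ (L : Set (List X)), {y | y ∈ w.tails} := by
      rintro y ⟨x, hx⟩
      simp only [Set.mem_iUnion]
      exact ⟨x ++ y, hx, by simp⟩
    exact (h.biUnion fun w _ => List.finite_toSet _).subset this
  refine hS.finite_subsets.subset ?_
  rintro _ ⟨x, rfl⟩ y hy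
  exact ⟨x, hy⟩

theorem finite_lq_mul {W V : Language X} (hW : (Set.range W.leftQuotient).Finite)
    (hV : (Set.range V.leftQuotient).Finite) : (Set.range (W * V).leftQuotient).Finite := by
  let G : Language X × Set (Language X) → Language X :=
    fun p => {y | y ∈ p.1 * V ∨ ∃ K ∈ p.2, y ∈ K}
  refine ((hW.prod hV.finite_subsets).image G).subset ?_
  rintro _ ⟨x, rfl⟩
  refine ⟨(W.leftQuotient x, {K | ∃ a b, a ++ b = x ∧ a ∈ W ∧ K = V.leftQuotient b}),
    ⟨⟨x, rfl⟩, ?_⟩, ?_⟩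
  · rintro K ⟨a, b, -, -, rfl⟩
    exact ⟨b, rfl⟩
  · apply Language.ext
    intro y
    rw [Language.mem_leftQuotient]
    constructor
    · rintro (h | ⟨K, ⟨a, b, rfl, ha, rfl⟩, hy⟩)
      · obtain ⟨a, ha, b, hb, rfl⟩ := Language.mem_mul.mp h
        rw [← List.append_assoc]
        exact Language.append_mem_mul ha hb
      · rw [List.append_assoc]
        exact Language.append_mem_mul ha hy
    · intro h
      obtain ⟨a, ha, b, hb, h⟩ := Language.mem_mul.mp h
      rcases List.append_eq_append_iff.mp h with ⟨c, h1, h2⟩ | ⟨c, h1, h2⟩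
      · right
        refine ⟨V.leftQuotient c, ⟨a, c, h1.symm, ha, rfl⟩, ?_⟩
        rw [Language.mem_leftQuotient, ← h2]; exact hb
      · left
        refine Language.mem_mul.mpr ⟨c, ?_, b, hb, h2.symm⟩
        rw [Language.mem_leftQuotient, ← h1]; exact ha

theorem finite_lq_star {W : Language X} (hW : (Set.range W.leftQuotient).Finite) :
    (Set.range (W∗).leftQuotient).Finite := by
  let G : Set (Language X) → Language X := fun S => {y | ∃ K ∈ S, y ∈ K * W∗}
  refine ((hW.finite_subsets.image G).insert (W∗)).subset ?_
  rintro _ ⟨x, rfl⟩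
  by_cases hx : x = []
  · left; subst hx; rfl
  right
  refine ⟨{K | ∃ a b, a ++ b = x ∧ a ∈ W∗ ∧ K = W.leftQuotient b}, ?_, ?_⟩
  · rintro K ⟨a, b, -, -, rfl⟩
    exact ⟨b, rfl⟩
  · have hmul : ∀ a ∈ W∗, ∀ b ∈ W∗, a ++ b ∈ W∗ := by
      intro a ha b hb
      obtain ⟨S, rfl, hS⟩ := Language.mem_kstar.mp ha
      obtain ⟨T, rfl, hT⟩ := Language.mem_kstar.mp hb
      rw [← List.flatten_append]
      apply Language.join_mem_kstar
      intro y hy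
      rcases List.mem_append.mp hy with h | h
      · exact hS y h
      · exact hT y h
    have hone : ∀ a ∈ W, a ∈ W∗ := by
      intro a ha
      exact Language.mem_kstar.mpr ⟨[a], by simp, by simpa using ha⟩
    apply Language.ext
    intro y
    rw [Language.mem_leftQuotient]
    constructor
    · rintro ⟨K, ⟨a, b, rfl, ha, rfl⟩, hy⟩
      obtain ⟨c, hc, d, hd, rfl⟩ := Language.mem_mul.mp hy
      have := hmul _ (hmul _ ha _ (hone _ hc)) _ hd
      simpa using this
    · intro h
      obtain ⟨S, hS, hSW⟩ := Language.mem_kstar.mp h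
      clear h
      have : ∀ (S : List (List X)) (x : List X), x ≠ [] → (∀ l ∈ S, l ∈ W) → x ++ y = S.flatten →
          ∃ a b c d, a ++ b = x ∧ a ∈ W∗ ∧ b ++ c ∈ W ∧ d ∈ W∗ ∧ c ++ d = y := by
        intro S
        induction S with
        | nil => intro x hx _ h; simp at h; exact absurd h.1 hx
        | cons l S ih =>
          intro x hx hSW h
          have hl : l ∈ W := hSW l (by simp)
          have hS' : ∀ l ∈ S, l ∈ W := fun l h => hSW l (by simp [h])
          rw [List.flatten_cons] at h
          rcases List.append_eq_append_iff.mp h with ⟨c, h1, h2⟩ | ⟨c, h1, h2⟩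
          · exact ⟨[], x, c, S.flatten, rfl, Language.nil_mem_kstar W, h1 ▸ hl,
              Language.join_mem_kstar hS', h2.symm⟩
          · by_cases hc : c = []
            · subst hc
              refine ⟨[], x, [], S.flatten, rfl, Language.nil_mem_kstar W, ?_,
                Language.join_mem_kstar hS', by simpa using h2⟩
              simp at h1
              simpa [h1] using hl
            · obtain ⟨a, b, c', d, e1, e2, e3, e4, e5⟩ := ih c hc hS' h2.symm
              exact ⟨l ++ a, b, c', d, by rw [h1, ← e1, List.append_assoc],
                hmul _ (hone _ hl) _ e2, e3, e4, e5⟩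
      obtain ⟨a, b, c, d, e1, e2, e3, e4, e5⟩ := this S x hx hSW hS
      exact ⟨W.leftQuotient b, ⟨a, b, e1, e2, rfl⟩, Language.mem_mul.mpr ⟨c, e3, d, e4, e5⟩⟩

theorem IsRegLang.finite_lq {L : Language X} (h : IsRegLang L) :
    (Set.range L.leftQuotient).Finite := by
  induction h with
  | finite W h => exact isRegular_of_finite h
  | union W V _ _ h1 h2 =>
    exact ((Language.IsRegular.of_finite_range_leftQuotient h1).add
      (Language.IsRegular.of_finite_range_leftQuotient h2)).finite_range_leftQuotient
  | concat W V _ _ h1 h2 => exact finite_lq_mul h1 h2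
  | star W _ h => exact finite_lq_star h

theorem kill {L : Language X} (hL : (Set.range L.leftQuotient).Finite)
    (h : ∀ u, ∃ p, ∀ q, u ++ p ++ q ∉ L) : ∃ y, ∀ x q, x ++ y ++ q ∉ L := by
  have : ∀ S : Set (Language X), S.Finite →
      ∃ y, ∀ x, L.leftQuotient x ∈ S → ∀ q, x ++ y ++ q ∉ L := by
    intro S hS
    induction S, hS using Set.Finite.induction_on with
    | empty => exact ⟨[], fun x hx => absurd hx (by simp)⟩
    | @insert K S _ _ ih =>
      obtain ⟨y, hy⟩ := ih
      by_cases hK : ∃ x0, L.leftQuotient x0 = K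
      · obtain ⟨x0, rfl⟩ := hK
        obtain ⟨p, hp⟩ := h (x0 ++ y)
        refine ⟨y ++ p, fun x hx q hq => ?_⟩
        rcases hx with hx | hx
        · apply hp q
          have : y ++ p ++ q ∈ L.leftQuotient x := by
            rw [Language.mem_leftQuotient]; simpa using hq
          rw [hx, Language.mem_leftQuotient] at this
          simpa using this
        · exact hy x hx (p ++ q) (by simpa using hq)
      · refine ⟨y, fun x hx => ?_⟩
        rcases hx with hx | hx
        · exact absurd ⟨x, hx⟩ hK
        · exact hy x hx
  obtain ⟨y, hy⟩ := this _ hL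
  exact ⟨y, fun x => hy x ⟨x, rfl⟩⟩

theorem flatten_length_ge {V : Language X} (f : ℕ → List X) (hf : ∀ i, f i ∈ V ∧ f i ≠ []) (k : ℕ) :
    k ≤ (((List.range k).map f).flatten).length := by
  induction k with
  | zero => simp
  | succ k ih =>
    rw [List.range_succ, List.map_append, List.flatten_append, List.length_append]
    have := List.length_pos_iff.mpr (hf k).2
    simp only [List.map_cons, List.map_nil, List.flatten_cons, List.flatten_nil, List.append_nil]
    omega

theorem exists_good [Nonempty X] {V : Language X} (hV : IsRegLang V) {w : List X} {η : ℕ → X}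
    (hη : η ∈ omegaPow V) (hd : Disjunctive (wcat w η)) :
    ∃ u, ∀ p, ∃ q, u ++ p ++ q ∈ V∗ := by
  by_contra hcon
  push Not at hcon
  obtain ⟨y, hy⟩ := kill (IsRegLang.star V hV).finite_lq hcon
  obtain ⟨a⟩ := ‹Nonempty X›
  obtain ⟨u, hu⟩ := hd (List.replicate w.length a ++ y)
  have hw : wcat w η ∈ cyl w := ⟨η, rfl⟩
  rw [← List.append_assoc] at hu
  obtain ⟨x, hx⟩ := prefix_of_cyl hw (cyl_append_sub _ _ hu) (by simp)
  rw [hx, List.append_assoc, mem_cyl_wcat] at hu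
  obtain ⟨f, hf, hk⟩ := hη
  obtain ⟨q, hq⟩ := prefix_of_cyl hu (hk (x ++ y).length) (flatten_length_ge f hf _)
  apply hy x q
  rw [← hq]
  apply Language.join_mem_kstar
  intro v hv
  obtain ⟨i, -, rfl⟩ := List.mem_map.mp hv
  exact (hf i).1

/-! Topology -/
section Top
variable [TopologicalSpace X] [DiscreteTopology X]

theorem cyl_open (w : List X) : IsOpen (cyl w) := by
  have : cyl w = ⋂ i : Fin w.length, (fun ξ : ℕ → X => ξ i) ⁻¹' {w[i]} := by
    ext ξ
    rw [mem_cyl_iff]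
    simp [Fin.forall_iff]
  rw [this]
  exact isOpen_iInter_of_finite fun i => (isOpen_discrete _).preimage (continuous_apply _)

theorem open_cyl {U : Set (ℕ → X)} (hU : IsOpen U) {ξ : ℕ → X} (h : ξ ∈ U) :
    ∃ n, ∀ w : List X, n ≤ w.length → ξ ∈ cyl w → cyl w ⊆ U := by
  rw [isOpen_pi_iff] at hU
  obtain ⟨I, u, hu, hsub⟩ := hU ξ h
  refine ⟨I.sup id + 1, fun w hw hξ η hη => hsub ?_⟩
  intro i hi
  have h1 : i ≤ I.sup id := Finset.le_sup (f := id) hi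
  rw [mem_cyl_iff] at hξ hη
  rw [hη i (by omega), ← hξ i (by omega)]
  exact (hu i hi).2

theorem cyl_nonempty [Nonempty X] (w : List X) : (cyl w).Nonempty :=
  ⟨wcat w (fun _ => Classical.arbitrary X), _, rfl⟩

theorem dense_open_cyl [Nonempty X] {D : Set (ℕ → X)} (hD : IsOpen D) (hd : Dense D) (v : List X) :
    ∃ p, cyl (v ++ p) ⊆ D := by
  obtain ⟨ξ, hξ, hξD⟩ := hd.inter_open_nonempty _ (cyl_open v) (cyl_nonempty v)
  obtain ⟨n, hn⟩ := open_cyl hD hξD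
  obtain ⟨η, rfl⟩ := hξ
  obtain ⟨p, η', hp, rfl⟩ := exists_split n η
  exact ⟨p, hn _ (by simp [hp]) ⟨η', by rw [wcat_append]⟩⟩

theorem nowhereDense_of_cyl [Nonempty X] {A : Set (ℕ → X)}
    (h : ∀ p, ∃ q, ∀ ξ ∈ cyl (p ++ q), ξ ∉ A) : IsNowhereDense A := by
  rw [IsNowhereDense, Set.eq_empty_iff_forall_notMem]
  intro ξ hξ
  obtain ⟨n, hn⟩ := open_cyl isOpen_interior hξ
  obtain ⟨p, η, hp, rfl⟩ := exists_split n ξ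
  have hs := hn p hp.ge ⟨η, rfl⟩
  obtain ⟨q, hq⟩ := h p
  obtain ⟨ζ, hζ⟩ := cyl_nonempty (p ++ q)
  have hc : ζ ∈ closure A := interior_subset (hs (cyl_append_sub _ _ hζ))
  obtain ⟨z, hz1, hz2⟩ := mem_closure_iff.mp hc _ (cyl_open (p ++ q)) hζ
  exact hq z hz1 hz2

theorem meagre_enum {A : Set (ℕ → X)} (h : IsMeagre A) :
    ∃ D : ℕ → Set (ℕ → X), (∀ n, IsOpen (D n) ∧ Dense (D n)) ∧ ∀ ξ, (∀ n, ξ ∈ D n) → ξ ∉ A := by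
  obtain ⟨S, ho, hd, hc, hs⟩ := mem_residual_iff.mp h
  rcases S.eq_empty_or_nonempty with rfl | hne
  · refine ⟨fun _ => Set.univ, fun _ => ⟨isOpen_univ, dense_univ⟩, fun ξ _ => hs (by simp)⟩
  · obtain ⟨D, rfl⟩ := hc.exists_eq_range hne
    exact ⟨D, fun n => ⟨ho _ ⟨n, rfl⟩, hd _ ⟨n, rfl⟩⟩, fun ξ hξ => hs (by simpa using hξ)⟩

theorem no_disj [Nonempty X] {W V : Language X} (hV : IsRegLang V)
    (hm : IsMeagre (catOmega W (omegaPow V))) : ∀ ξ ∈ catOmega W (omegaPow V), ¬ Disjunctive ξ := by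
  rintro _ ⟨w, hw, η, hη, rfl⟩ hdis
  obtain ⟨u, hu⟩ := exists_good hV hη hdis
  obtain ⟨D, hD, hDA⟩ := meagre_enum hm
  have step : ∀ n (v : List X), ∃ g, g ∈ V∗ ∧ g ≠ [] ∧ cyl (v ++ g) ⊆ D n := by
    intro n v
    obtain ⟨p, hp⟩ := dense_open_cyl (hD n).1 (hD n).2 (v ++ u)
    obtain ⟨a⟩ := ‹Nonempty X›
    obtain ⟨q, hq⟩ := hu (p ++ [a])
    refine ⟨_, hq, by simp, ?_⟩
    have : v ++ (u ++ (p ++ [a]) ++ q) = (v ++ u ++ p) ++ ([a] ++ q) := by simp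
    rw [this]
    exact (cyl_append_sub _ _).trans hp
  choose g hgV hgne hgD using step
  let v : ℕ → List X := fun n => Nat.rec w (fun n x => x ++ g n x) n
  have hvs : ∀ n, v (n + 1) = v n ++ g n (v n) := fun n => rfl
  obtain ⟨ζ, hζ⟩ := exists_limit v fun n => ⟨g n (v n), hgne _ _, hvs n⟩
  apply hDA ζ
  · intro n
    apply hgD n (v n)
    rw [← hvs]
    exact hζ (n + 1)
  · have hv : ∀ k, v k = w ++ ((List.range k).map (fun n => g n (v n))).flatten := by
      intro k
      induction k with
      | zero => simp [v]
      | succ k ih =>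
        rw [hvs, List.range_succ, List.map_append, List.flatten_append, ← List.append_assoc, ← ih]
        simp
    obtain ⟨θ, rfl⟩ := hζ 0
    refine ⟨w, hw, θ, omegaPow_kstar V ⟨fun n => g n (v n), fun i => ⟨hgV _ _, hgne _ _⟩,
      fun k => ?_⟩, rfl⟩
    rw [← mem_cyl_wcat w, ← hv]
    exact hζ k

theorem meagre_singleton [Nontrivial X] (ξ : ℕ → X) : IsMeagre ({ξ} : Set (ℕ → X)) := by
  apply IsNowhereDense.isMeagre
  apply nowhereDense_of_cyl
  intro p
  obtain ⟨a, ha⟩ := exists_ne (ξ p.length)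
  refine ⟨[a], ?_⟩
  rintro η hη rfl
  apply ha
  rw [mem_cyl_iff] at hη
  rw [hη p.length (by simp)]
  simp

end Top

/-- blocks of length `|w|` different from `w` -/
def blk (w : List X) : Language X := {v | v.length = w.length ∧ v ≠ w}

theorem blk_finite [Finite X] (w : List X) : (blk w : Set (List X)).Finite :=
  (List.finite_length_eq X w.length).subset fun _ h => h.1

theorem mem_blk_omega {w : List X} {ξ : ℕ → X} (h : ξ ∉ infixOcc w) : ξ ∈ omegaPow (blk w) := by
  refine omegaPow_coind (blk w) {η | η ∉ infixOcc w} ?_ h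
  intro η hη
  obtain ⟨v, η', hv, rfl⟩ := exists_split w.length η
  refine ⟨v, ⟨hv, ?_⟩, ?_, η', ?_, rfl⟩
  · rintro rfl
    exact hη ⟨[], η', rfl⟩
  · rintro rfl
    have : w = [] := List.length_eq_zero_iff.mp hv.symm
    subst this
    exact hη ⟨[], _, rfl⟩
  · rintro ⟨u, hu⟩
    apply hη
    refine ⟨v ++ u, ?_⟩
    rw [List.append_assoc, mem_cyl_wcat]
    exact hu

theorem blk_nd [TopologicalSpace X] [DiscreteTopology X] [Nonempty X] {w : List X} (hw : w ≠ []) :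
    IsNowhereDense (omegaPow (blk w)) := by
  apply nowhereDense_of_cyl
  intro p
  obtain ⟨a⟩ := ‹Nonempty X›
  refine ⟨List.replicate (p.length * w.length - p.length) a ++ w, ?_⟩
  rintro ξ hξ ⟨f, hf, hk⟩
  have hwl := List.length_pos_iff.mpr hw
  have hlen : ∀ k, (((List.range k).map f).flatten).length = k * w.length := by
    intro k
    induction k with
    | zero => simp
    | succ k ih =>
      rw [List.range_succ, List.map_append, List.flatten_append, List.length_append, ih]
      simp [(hf k).1.1, Nat.succ_mul]
  have h1 := hk (p.length + 1)
  have hpl : p.length ≤ p.length * w.length := Nat.le_mul_of_pos_right _ hwl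
  obtain ⟨η, rfl⟩ := hξ
  obtain ⟨θ, hθ⟩ := h1
  have he := wcat_inj_left hθ (by
    rw [hlen]; simp only [List.length_append, List.length_replicate, Nat.succ_mul]; omega)
  rw [List.range_succ, List.map_append, List.flatten_append, ← List.append_assoc] at he
  have := (List.append_inj he (by
    rw [hlen]; simp only [List.length_append, List.length_replicate]; omega)).2
  simp only [List.map_cons, List.map_nil, List.flatten_cons, List.flatten_nil,
    List.append_nil] at this
  exact (hf p.length).1.2 this.symm

theorem catOmega_one (A : Set (ℕ → X)) : catOmega (1 : Language X) A = A := by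
  ext ξ
  constructor
  · rintro ⟨w, hw, η, hη, rfl⟩
    rw [Language.mem_one] at hw
    subst hw
    exact hη
  · intro h
    exact ⟨[], Language.nil_mem_one, ξ, h, rfl⟩

theorem stmt13 {X : Type} [Fintype X] (hX : 2 ≤ Fintype.card X)
    (F : Set (ℕ → X)) (hfin : F.Finite) :
    HasABP F ↔ ∀ ξ ∈ F, ¬ Disjunctive ξ := by
  haveI : Nontrivial X := Fintype.one_lt_card_iff_nontrivial.mp hX
  letI : TopologicalSpace X := ⊥
  haveI : DiscreteTopology X := ⟨rfl⟩
  have htop : cantorTop X = (inferInstance : TopologicalSpace (ℕ → X)) := rfl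
  unfold HasABP
  rw [htop]
  constructor
  · rintro ⟨E, F', -, hEo, ⟨n, W, V, hreg, rfl⟩, hm, hsub⟩ ξ hξ
    have hFm : IsMeagre F := by
      rw [← Set.biUnion_of_singleton F]
      exact isMeagre_biUnion hfin.countable fun ξ _ => meagre_singleton ξ
    have hEm : IsMeagre E := by
      refine (hFm.union hm).mono ?_
      intro x hx
      by_cases h : x ∈ F
      · exact Or.inl h
      · exact Or.inr (hsub (Or.inr ⟨hx, h⟩))
    have hE : E = ∅ := by
      by_contra hne
      exact not_isMeagre_of_isOpen hEo (Set.nonempty_iff_ne_empty.mpr hne) hEm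
    subst hE
    have hξ' := hsub (Or.inl ⟨hξ, fun h => h⟩)
    obtain ⟨i, hi⟩ := Set.mem_iUnion.mp hξ'
    exact no_disj (hreg i).2 (hm.mono (Set.subset_iUnion_of_subset i subset_rfl)) ξ hi
  · intro hF
    have : ∀ ξ ∈ F, ∃ w : List X, ξ ∉ infixOcc w := by
      intro ξ hξ
      have := hF ξ hξ
      unfold Disjunctive at this
      push Not at this
      exact this
    choose! w hw using this
    have hwne : ∀ ξ ∈ F, w ξ ≠ [] := by
      intro ξ hξ h
      apply hw ξ hξ
      rw [h]
      exact ⟨[], ξ, rfl⟩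
    haveI := hfin.to_subtype
    obtain ⟨n, ⟨e⟩⟩ := Finite.exists_equiv_fin F
    refine ⟨∅, ⋃ i : Fin n, catOmega (1 : Language X) (omegaPow (blk (w (e.symm i)))), ?_,
      isOpen_empty, ?_, ?_, ?_⟩
    · exact ⟨0, fun _ => 1, fun _ => 1, fun i => i.elim0, by simp⟩
    · refine ⟨n, fun _ => 1, fun i => blk (w (e.symm i)), fun i => ⟨?_, ?_⟩, rfl⟩
      · exact IsRegLang.finite _ (Set.finite_singleton [])
      · exact IsRegLang.finite _ (blk_finite _)
    · refine isMeagre_iUnion fun i => ?_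
      rw [catOmega_one]
      exact (blk_nd (hwne _ (e.symm i).2)).isMeagre
    · rintro ξ (⟨hξ, -⟩ | ⟨h, -⟩)
      · refine Set.mem_iUnion.mpr ⟨e ⟨ξ, hξ⟩, ?_⟩
        rw [catOmega_one]
        simp only [Equiv.symm_apply_apply]
        exact mem_blk_omega (hw ξ hξ)
      · exact absurd h (by simp)

end AutoBaire
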